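/- Let g₁, …, g_n ∈ 𝔽_{q^m} be linearly independent over 𝔽_q, let 1 ≤ k ≤ n, and let r = (r₁, …, r_n) ∈ 𝔽_{q^m}^n. Suppose N and D are q-linearized polynomials over 𝔽_{q^m} with D ≠ 0 of q-degree t, the q-degree of N at most t + k − 1, N(g_i) − D(r_i) = 0 for all i = 1, …, n, and N = D ∘ f for some q-linearized polynomial f (composition of polynomials). Then f has q-degree at most k − 1, and the codeword c = (f(g₁), …, f(g_n)) satisfies D(f(g_i)) = D(r_i) for all i and d_R(c, r) ≤ t. -/

import Mathlib

/-!
Since degrees multiply under composition, `deg N = q ^ t * deg f`, which bounds `deg f`.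
For the distance, a `q`-linearized polynomial evaluates as a `K`-linear map (a combination of
powers of the Frobenius, `IsLinearized.exists_linearMap`). So every `c i - r i` lies in the kernel
of evaluation of `D`; this kernel consists of roots of `D`, hence has at most `q ^ t` elements,
and any `K`-subspace of it has dimension at most `t`.
-/

open Polynomial

/-- A polynomial over `L` is `q`-linearized if every monomial with nonzero coefficient
has degree a power of `q`, i.e. it is of the form `∑ aᵢ X^(q^i)`. -/
def IsLinearized {L : Type*} [Field L] (q : ℕ) (f : L[X]) : Prop :=
  ∀ n : ℕ, f.coeff n ≠ 0 → ∃ i : ℕ, n = q ^ i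

/-- The rank distance between `u, v ∈ L^n`: the `K`-dimension of the `K`-span of the
coordinates of `u - v`. -/
noncomputable def rankDist (K : Type*) {L : Type*} [Field K] [Field L] [Algebra K L]
    {n : ℕ} (u v : Fin n → L) : ℕ :=
  Module.finrank K (Submodule.span K (Set.range fun i => u i - v i))

/-- Evaluation of a `q`-linearized polynomial is `K`-linear, where `q = #K`. -/
theorem IsLinearized.exists_linearMap (K : Type*) {L : Type*} [Field K] [Field L] [Algebra K L]
    [Fintype K] {D : L[X]} (hD : IsLinearized (Fintype.card K) D) :
    ∃ φ : L →ₗ[K] L, ∀ x, φ x = D.eval x := by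
  have key : ∀ n, ∃ ψ : L →ₗ[K] L, ∀ x, ψ x = D.coeff n * x ^ n := by
    intro n
    by_cases h : D.coeff n = 0
    · exact ⟨0, fun x => by simp [h]⟩
    · obtain ⟨i, rfl⟩ := hD n h
      refine ⟨LinearMap.mulLeft K (D.coeff (Fintype.card K ^ i)) ∘ₗ
        ((FiniteField.frobeniusAlgHom K L) ^ i).toLinearMap, fun x => ?_⟩
      simp [AlgHom.coe_pow, FiniteField.coe_frobeniusAlgHom, pow_iterate]
  choose ψ hψ using key
  exact ⟨∑ n ∈ D.support, ψ n, fun x => by simp [hψ, eval_eq_sum, Polynomial.sum]⟩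

/-- Let `g₁, …, g_n ∈ 𝔽_{q^m}` be linearly independent over `𝔽_q`,
`1 ≤ k ≤ n`, and `r ∈ 𝔽_{q^m}^n`. Suppose `N` and `D` are `q`-linearized polynomials with
`D ≠ 0` of `q`-degree `t`, the `q`-degree of `N` at most `t + k − 1`,
`N(gᵢ) − D(rᵢ) = 0` for all `i`, and `N = D ∘ f` for some `q`-linearized polynomial `f`.
Then `f` has `q`-degree at most `k − 1`, and the codeword `c = (f(g₁), …, f(g_n))`
satisfies `D(f(gᵢ)) = D(rᵢ)` for all `i` and `d_R(c, r) ≤ t`. -/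
theorem stmt14 (K L : Type*) [Field K] [Field L] [Algebra K L] [Fintype K] [Fintype L]
    (q m : ℕ) (hq : q = Fintype.card K) (hm : Fintype.card L = q ^ m)
    (n k : ℕ) (hk1 : 1 ≤ k) (hkn : k ≤ n)
    (g : Fin n → L) (hg : LinearIndependent K g) (r : Fin n → L)
    (t : ℕ) (N D : L[X]) (hNlin : IsLinearized q N) (hDlin : IsLinearized q D)
    (hD0 : D ≠ 0) (hDdeg : D.natDegree = q ^ t) (hNdeg : N.degree ≤ (q ^ (t + k - 1) : ℕ))
    (hint : ∀ i, N.eval (g i) - D.eval (r i) = 0)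
    (f : L[X]) (hflin : IsLinearized q f) (hN : N = D.comp f)
    (c : Fin n → L) (hc : ∀ i, c i = f.eval (g i)) :
    f.degree ≤ (q ^ (k - 1) : ℕ) ∧
      (∀ i, D.eval (f.eval (g i)) = D.eval (r i)) ∧
      rankDist K c r ≤ t := by
  subst hq
  have hq1 : 1 < Fintype.card K := Fintype.one_lt_card
  have hDf : ∀ i, D.eval (f.eval (g i)) = D.eval (r i) := fun i => by
    have := hint i
    rw [hN, eval_comp] at this
    exact sub_eq_zero.mp this
  refine ⟨?_, hDf, ?_⟩
  · rw [← natDegree_le_iff_degree_le] at hNdeg ⊢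
    rw [hN, natDegree_comp, hDdeg, Nat.add_sub_assoc hk1, pow_add] at hNdeg
    exact Nat.le_of_mul_le_mul_left hNdeg (pow_pos (by omega) t)
  · obtain ⟨φ, hφ⟩ := hDlin.exists_linearMap K
    set S := Submodule.span K (Set.range fun i => c i - r i) with hS
    have hker : S ≤ LinearMap.ker φ := by
      rw [hS, Submodule.span_le]
      rintro _ ⟨i, rfl⟩
      simp only [SetLike.mem_coe, LinearMap.mem_ker]
      rw [map_sub, hφ, hφ, hc, hDf, sub_self]
    have hroots : (S : Set L) ⊆ D.rootSet L := by
      intro x hx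
      rw [mem_rootSet]
      exact ⟨hD0, by simpa [hφ] using hker hx⟩
    have hcard : Nat.card S ≤ Fintype.card K ^ t := by
      rw [← hDdeg]
      calc Nat.card S = (S : Set L).ncard := rfl
        _ ≤ (D.rootSet L).ncard := Set.ncard_le_ncard hroots (Set.toFinite _)
        _ ≤ D.natDegree := ncard_rootSet_le D L
    rw [Module.natCard_eq_pow_finrank (K := K), Nat.card_eq_fintype_card] at hcard
    exact (Nat.pow_le_pow_iff_right hq1).mp hcard
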